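/- arXiv:1802.10560 — 4 statements merged into one kernel-verified Lean document; each statement's English description precedes it below -/
import Mathlib

section
/- Let (X, 𝒜, μ) be a measure space with μ σ-finite, and let p, q : X → ℝ be measurable functions with p ≥ 0, q ≥ 0, ∫ p dμ = 1 and ∫ q dμ = 1. For every measurable function D : X → ℝ with 0 < D(x) < 1 for all x, one has ∫ (p(x)·log D(x) + q(x)·log(1−D(x))) dμ(x) ≤ ∫_{ {x : p(x)+q(x) > 0} } (p(x)·log(p(x)/(p(x)+q(x))) + q(x)·log(q(x)/(p(x)+q(x)))) dμ(x), where both sides are interpreted as extended-real-valued integrals (the left side may be −∞). -/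
open MeasureTheory Real Set

/-!
The inequality already holds between the integrands. Given weights `a i ≥ 0` with sum `s` and
`d i > 0`, applying `log t ≤ t - 1` to `t = d i * s / a i` bounds `a i * log (d i)` by
`a i * log (a i / s)` up to the error `d i * s - a i`, and these errors add up to
`(∑ d i - 1) * s ≤ 0`.
-/

theorem mul_log_le_mul_log_div_add {a s d : ℝ} (ha : 0 ≤ a) (hs : 0 < s) (hd : 0 < d) :
    a * log d ≤ a * log (a / s) + (d * s - a) := by
  rcases ha.eq_or_lt with rfl | ha
  · simpa using (mul_pos hd hs).le
  have log_ratio_le : log d - log (a / s) ≤ d / (a / s) - 1 := by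
    rw [← log_div hd.ne' (div_pos ha hs).ne']
    exact log_le_sub_one_of_pos (by positivity)
  calc a * log d = a * log (a / s) + a * (log d - log (a / s)) := by ring
    _ ≤ a * log (a / s) + a * (d / (a / s) - 1) := by gcongr
    _ = a * log (a / s) + (d * s - a) := by field_simp

theorem sum_mul_log_le_sum_mul_log_div_sum {ι : Type*} {t : Finset ι} {a d : ι → ℝ}
    (ha : ∀ i ∈ t, 0 ≤ a i) (hd : ∀ i ∈ t, 0 < d i) (hd_sum : ∑ i ∈ t, d i ≤ 1) :
    ∑ i ∈ t, a i * log (d i) ≤ ∑ i ∈ t, a i * log (a i / ∑ j ∈ t, a j) := by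
  set s := ∑ j ∈ t, a j with hs_def
  have hs : 0 ≤ s := Finset.sum_nonneg ha
  rcases hs.eq_or_lt with hs_zero | hs_pos
  · have ha_zero : ∀ i ∈ t, a i = 0 := (Finset.sum_eq_zero_iff_of_nonneg ha).1 hs_zero.symm
    exact Finset.sum_le_sum fun i hi ↦ by simp [ha_zero i hi]
  calc ∑ i ∈ t, a i * log (d i)
      ≤ ∑ i ∈ t, (a i * log (a i / s) + (d i * s - a i)) :=
        Finset.sum_le_sum fun i hi ↦ mul_log_le_mul_log_div_add (ha i hi) hs_pos (hd i hi)
    _ = ∑ i ∈ t, a i * log (a i / s) + (∑ i ∈ t, d i - 1) * s := by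
        rw [Finset.sum_add_distrib, Finset.sum_sub_distrib, ← Finset.sum_mul, ← hs_def]
        ring
    _ ≤ ∑ i ∈ t, a i * log (a i / s) :=
        add_le_of_nonpos_right (mul_nonpos_of_nonpos_of_nonneg (sub_nonpos.2 hd_sum) hs)

theorem mul_log_add_mul_log_one_sub_le {a b d : ℝ} (ha : 0 ≤ a) (hb : 0 ≤ b)
    (hd : d ∈ Ioo (0 : ℝ) 1) :
    a * log d + b * log (1 - d) ≤ a * log (a / (a + b)) + b * log (b / (a + b)) := by
  have gibbs := sum_mul_log_le_sum_mul_log_div_sum (t := Finset.univ) (a := ![a, b])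
    (d := ![d, 1 - d]) (by simp [Fin.forall_fin_two, ha, hb])
    (by simp [Fin.forall_fin_two, hd.1, hd.2]) (by simp [Fin.sum_univ_two])
  simpa [Fin.sum_univ_two] using gibbs

theorem gan_optimal_discriminator_upper_bound_general
    {X : Type*} [MeasurableSpace X] {μ : Measure X} {p q D : X → ℝ}
    (hp : 0 ≤ᵐ[μ] p) (hq : 0 ≤ᵐ[μ] q) (hD : ∀ᵐ x ∂μ, D x ∈ Ioo (0 : ℝ) 1) :
    ∫⁻ x in {x | 0 < p x + q x},
        ENNReal.ofReal (-(p x * log (p x / (p x + q x)) + q x * log (q x / (p x + q x)))) ∂μ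
      ≤ ∫⁻ x, ENNReal.ofReal (-(p x * log (D x) + q x * log (1 - D x))) ∂μ := by
  -- Enlarging the domain loses nothing: if `p x + q x = 0`, the integrand is `0 * log (0 / 0) = 0`.
  refine (setLIntegral_le_lintegral _ _).trans (lintegral_mono_ae ?_)
  filter_upwards [hp, hq, hD] with x hpx hqx hDx
  exact ENNReal.ofReal_le_ofReal (neg_le_neg (mul_log_add_mul_log_one_sub_le hpx hqx hDx))

/-- For densities `p, q` w.r.t. a σ-finite measure `μ` and any discriminator
`D : X → (0,1)`, the objective `∫ (p·log D + q·log(1−D)) dμ` is at most the value attained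
by the optimal discriminator `p/(p+q)` on the set `{p+q > 0}`.  Both sides are interpreted
as extended-real-valued integrals (possibly `−∞`): since both integrands are nonpositive,
the inequality is expressed via the `ℝ≥0∞`-valued lower integrals of their negations
(so the direction of the inequality is reversed). -/
theorem gan_optimal_discriminator_upper_bound
    {X : Type*} [MeasurableSpace X] (μ : Measure X) [SigmaFinite μ]
    (p q : X → ℝ) (hpm : Measurable p) (hqm : Measurable q)
    (hp0 : ∀ x, 0 ≤ p x) (hq0 : ∀ x, 0 ≤ q x)
    (hp1 : ∫ x, p x ∂μ = 1) (hq1 : ∫ x, q x ∂μ = 1)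
    (D : X → ℝ) (hDm : Measurable D) (hD : ∀ x, D x ∈ Set.Ioo (0:ℝ) 1) :
    ∫⁻ x in {x | 0 < p x + q x},
        ENNReal.ofReal
          (-(p x * Real.log (p x / (p x + q x)) + q x * Real.log (q x / (p x + q x)))) ∂μ
      ≤ ∫⁻ x, ENNReal.ofReal (-(p x * Real.log (D x) + q x * Real.log (1 - D x))) ∂μ :=
  gan_optimal_discriminator_upper_bound_general (.of_forall hp0) (.of_forall hq0) (.of_forall hD)
end

section
/- (Proposition 1.) Let X be a measurable space with σ-finite measure μ, let p_data, p_novel : X → ℝ be densities with respect to μ, and assume p_data(x) > 0 for all x ∈ X. Let π ∈ (0,1], set p_g(x) = π·p_novel(x) + (1−π)·p_data(x), and define the optimal discriminator D*(x) = p_data(x)/(p_data(x)+p_g(x)). Fix c ∈ (0,1), let φ* be the indicator function of {x : D*(x) < c}, and let α = ∫ φ*·p_data dμ. Then for every measurable function φ : X → [0,1] with ∫ φ·p_data dμ ≤ α, one has ∫ φ·p_novel dμ ≤ ∫ φ*·p_novel dμ. That is, the test that declares x novel when D*(x) < c is a most powerful test at false positive rate α for detecting p_novel against p_data. -/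
open MeasureTheory Real Set

/-!
`D* < c` unfolds to a lower bound on the likelihood ratio `p_novel / p_data`, so thresholding `D*`
is a likelihood-ratio test and the Neyman–Pearson argument applies: if `ψ` is the likelihood-ratio
test with threshold `t`, then `(ψ - φ) (p_novel - t p_data) ≥ 0` pointwise for every test `φ`, and
integrating gives `power ψ - power φ ≥ t (FPR ψ - FPR φ)`. When `c > 1 / (2 - π)` the threshold is
negative; the test then rejects wherever `p_novel > 0`, as does the test with threshold `0`.
-/

/-- A randomized test: `φ x` is the probability of rejecting the null hypothesis on observing `x`.
Both requirements are only imposed up to `μ`-null sets. -/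
structure IsRandomizedTest {X : Type*} [MeasurableSpace X] (φ : X → ℝ) (μ : Measure X) : Prop where
  aestronglyMeasurable : AEStronglyMeasurable φ μ
  mem_Icc : ∀ᵐ x ∂μ, φ x ∈ Icc (0 : ℝ) 1

/-- A likelihood-ratio test of the null density `p` against the alternative `q` with threshold `t`.
The comparison of `q / p` with `t` is written without division so that `p` may vanish, and the value
of the test on the boundary `q = t * p` is left free. -/
structure IsLikelihoodRatioTest {X : Type*} [MeasurableSpace X] (ψ p q : X → ℝ) (t : ℝ)
    (μ : Measure X) : Prop where
  eq_one : ∀ᵐ x ∂μ, t * p x < q x → ψ x = 1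
  eq_zero : ∀ᵐ x ∂μ, q x < t * p x → ψ x = 0

/-- The density of the mixture drawing from `q` with probability `w` and from `p` otherwise. -/
def mixtureDensity {X : Type*} (w : ℝ) (q p : X → ℝ) (x : X) : ℝ :=
  w * q x + (1 - w) * p x

/-- The optimal GAN discriminator between data of density `p` and a generator of density `g`.
It takes the junk value `0` where both densities vanish. -/
noncomputable def optimalDiscriminator {X : Type*} (p g : X → ℝ) (x : X) : ℝ :=
  p x / (p x + g x)

/-- The likelihood-ratio threshold that corresponds to the level `c` of the optimal discriminator
against the generator `mixtureDensity w q p`, obtained by solving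
`p / (p + w * q + (1 - w) * p) = c` for `q / p`. -/
noncomputable def mixtureThreshold (w c : ℝ) : ℝ :=
  (1 - c * (2 - w)) / (c * w)

section Pointwise

variable {X : Type*} {p q : X → ℝ} {w c : ℝ} {x : X}

theorem optimalDiscriminator_mixtureDensity_lt_iff (hw : 0 < w) (hc : 0 < c)
    (hx : 0 < p x + mixtureDensity w q p x) :
    optimalDiscriminator p (mixtureDensity w q p) x < c ↔ mixtureThreshold w c * p x < q x := by
  rw [optimalDiscriminator, mixtureThreshold, div_lt_iff₀ hx, div_mul_eq_mul_div,
    div_lt_iff₀ (mul_pos hc hw), mixtureDensity]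
  constructor <;> intro h <;> linarith

theorem add_mixtureDensity_pos_or_eq_zero (hw : w ∈ Ioc (0 : ℝ) 1) (hp : 0 ≤ p x)
    (hq : 0 ≤ q x) : 0 < p x + mixtureDensity w q p x ∨ p x = 0 ∧ q x = 0 := by
  have hwp : 0 ≤ (1 - w) * p x := mul_nonneg (sub_nonneg.2 hw.2) hp
  have hwq : 0 ≤ w * q x := mul_nonneg hw.1.le hq
  unfold mixtureDensity
  rcases hp.eq_or_lt with hp0 | hp0
  · rcases hq.eq_or_lt with hq0 | hq0
    · exact .inr ⟨hp0.symm, hq0.symm⟩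
    · exact .inl (by linarith [mul_pos hw.1 hq0])
  · exact .inl (by linarith)

end Pointwise

section Tests

variable {X : Type*} [MeasurableSpace X] {μ : Measure X} {p q φ ψ : X → ℝ} {t w c : ℝ}

theorem isRandomizedTest_indicator_one {s : Set X} (hs : NullMeasurableSet s μ) :
    IsRandomizedTest (s.indicator fun _ => 1) μ where
  aestronglyMeasurable := aestronglyMeasurable_const.indicator₀ hs
  mem_Icc := .of_forall fun _ =>
    ⟨indicator_nonneg (fun _ _ => zero_le_one) _, indicator_le_self' (fun _ _ => zero_le_one) _⟩

theorem IsRandomizedTest.integrable_mul (hφ : IsRandomizedTest φ μ) (hp : Integrable p μ) :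
    Integrable (fun x => φ x * p x) μ := by
  refine hp.bdd_mul (c := 1) hφ.aestronglyMeasurable ?_
  filter_upwards [hφ.mem_Icc] with x hx
  rw [Real.norm_of_nonneg hx.1]
  exact hx.2

theorem IsLikelihoodRatioTest.mul_sub_le_mul_sub (hψ : IsLikelihoodRatioTest ψ p q t μ)
    (hφ : IsRandomizedTest φ μ) :
    ∀ᵐ x ∂μ, φ x * (q x - t * p x) ≤ ψ x * (q x - t * p x) := by
  filter_upwards [hψ.eq_one, hψ.eq_zero, hφ.mem_Icc] with x hone hzero hx
  rcases lt_trichotomy (t * p x) (q x) with hlt | heq | hgt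
  · rw [hone hlt]
    exact mul_le_mul_of_nonneg_right hx.2 (sub_nonneg.2 hlt.le)
  · simp [heq]
  · rw [hzero hgt]
    exact mul_le_mul_of_nonpos_right hx.1 (sub_nonpos.2 hgt.le)

theorem IsLikelihoodRatioTest.integral_mul_sub_le (hψ : IsLikelihoodRatioTest ψ p q t μ)
    (hψt : IsRandomizedTest ψ μ) (hφ : IsRandomizedTest φ μ)
    (hp : Integrable p μ) (hq : Integrable q μ) :
    ∫ x, φ x * q x ∂μ - t * ∫ x, φ x * p x ∂μ ≤ ∫ x, ψ x * q x ∂μ - t * ∫ x, ψ x * p x ∂μ := by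
  have integral_mul_sub {f : X → ℝ} (hf : IsRandomizedTest f μ) :
      ∫ x, f x * (q x - t * p x) ∂μ = ∫ x, f x * q x ∂μ - t * ∫ x, f x * p x ∂μ := by
    simp only [mul_sub, mul_left_comm _ t]
    rw [integral_sub (hf.integrable_mul hq) ((hf.integrable_mul hp).const_mul t),
      integral_const_mul]
  have hdiff : Integrable (fun x => q x - t * p x) μ := hq.sub (hp.const_mul t)
  rw [← integral_mul_sub hφ, ← integral_mul_sub hψt]
  exact integral_mono_ae (hφ.integrable_mul hdiff) (hψt.integrable_mul hdiff)
    (hψ.mul_sub_le_mul_sub hφ)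

theorem neyman_pearson (hψ : IsLikelihoodRatioTest ψ p q t μ) (ht : 0 ≤ t)
    (hψt : IsRandomizedTest ψ μ) (hφ : IsRandomizedTest φ μ)
    (hp : Integrable p μ) (hq : Integrable q μ)
    (hfpr : ∫ x, φ x * p x ∂μ ≤ ∫ x, ψ x * p x ∂μ) :
    ∫ x, φ x * q x ∂μ ≤ ∫ x, ψ x * q x ∂μ := by
  have hlagrangian := hψ.integral_mul_sub_le hψt hφ hp hq
  have hcost := mul_le_mul_of_nonneg_left hfpr ht
  linarith

theorem IsLikelihoodRatioTest.max_zero (hψ : IsLikelihoodRatioTest ψ p q t μ)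
    (hp : 0 ≤ᵐ[μ] p) (hq : 0 ≤ᵐ[μ] q) : IsLikelihoodRatioTest ψ p q (max t 0) μ where
  eq_one := by
    filter_upwards [hψ.eq_one, hp] with x hone hpx hlt
    exact hone ((mul_le_mul_of_nonneg_right (le_max_left t 0) hpx).trans_lt hlt)
  eq_zero := by
    filter_upwards [hψ.eq_zero, hq] with x hzero hqx hlt
    rcases max_choice t 0 with hmax | hmax <;> rw [hmax] at hlt
    · exact hzero hlt
    · exact absurd hlt (by simpa using hqx)

theorem isLikelihoodRatioTest_optimalDiscriminator_lt (hw : w ∈ Ioc (0 : ℝ) 1) (hc : 0 < c)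
    (hp : 0 ≤ᵐ[μ] p) (hq : 0 ≤ᵐ[μ] q) :
    IsLikelihoodRatioTest
      ({x | optimalDiscriminator p (mixtureDensity w q p) x < c}.indicator fun _ => 1)
      p q (mixtureThreshold w c) μ where
  eq_one := by
    filter_upwards [hp, hq] with x hpx hqx hlt
    rcases add_mixtureDensity_pos_or_eq_zero hw hpx hqx with hpos | ⟨hp0, hq0⟩
    · rw [indicator_of_mem]
      exact (optimalDiscriminator_mixtureDensity_lt_iff hw.1 hc hpos).2 hlt
    · simp [hp0, hq0] at hlt
  eq_zero := by
    filter_upwards [hp, hq] with x hpx hqx hlt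
    rcases add_mixtureDensity_pos_or_eq_zero hw hpx hqx with hpos | ⟨hp0, hq0⟩
    · rw [indicator_of_notMem]
      exact mt (optimalDiscriminator_mixtureDensity_lt_iff hw.1 hc hpos).1 hlt.not_gt
    · simp [hp0, hq0] at hlt

theorem aemeasurable_optimalDiscriminator_mixtureDensity (hp : AEMeasurable p μ)
    (hq : AEMeasurable q μ) : AEMeasurable (optimalDiscriminator p (mixtureDensity w q p)) μ :=
  hp.div (hp.add ((hq.const_mul w).add (hp.const_mul (1 - w))))

theorem optimal_discriminator_is_optimal_novelty_detector_general
    (hp : Integrable p μ) (hq : Integrable q μ) (hp0 : 0 ≤ᵐ[μ] p) (hq0 : 0 ≤ᵐ[μ] q)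
    (hw : w ∈ Ioc (0 : ℝ) 1) (hc : 0 < c)
    (hψ : ψ = {x | optimalDiscriminator p (mixtureDensity w q p) x < c}.indicator fun _ => 1)
    (hφ : IsRandomizedTest φ μ) (hfpr : ∫ x, φ x * p x ∂μ ≤ ∫ x, ψ x * p x ∂μ) :
    ∫ x, φ x * q x ∂μ ≤ ∫ x, ψ x * q x ∂μ := by
  subst hψ
  have hψ := (isLikelihoodRatioTest_optimalDiscriminator_lt hw hc hp0 hq0).max_zero hp0 hq0
  have hreject := nullMeasurableSet_lt
    (aemeasurable_optimalDiscriminator_mixtureDensity (w := w) hp.aemeasurable hq.aemeasurable)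
    (aemeasurable_const (b := c))
  exact neyman_pearson hψ (le_max_right _ _) (isRandomizedTest_indicator_one hreject) hφ hp hq hfpr

end Tests

/-- Proposition 1 of the paper: when the mixture generator's other component is the novel
density, i.e. `p_g = π·p_novel + (1−π)·p_data`, the test declaring `x` novel when the
optimal discriminator `D*(x) = p_data(x)/(p_data(x)+p_g(x))` is below `c` is a most
powerful test, at its own false positive rate, for detecting `p_novel` against `p_data`. -/
theorem optimal_discriminator_is_optimal_novelty_detector
    {X : Type*} [MeasurableSpace X] (μ : Measure X) [SigmaFinite μ]
    (pdata pnovel : X → ℝ) (hdm : Measurable pdata) (hnm : Measurable pnovel)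
    (hd0 : ∀ x, 0 < pdata x) (hn0 : ∀ x, 0 ≤ pnovel x)
    (hd1 : ∫ x, pdata x ∂μ = 1) (hn1 : ∫ x, pnovel x ∂μ = 1)
    (pi : ℝ) (hpi : pi ∈ Set.Ioc (0:ℝ) 1)
    (pg : X → ℝ) (hpg : ∀ x, pg x = pi * pnovel x + (1 - pi) * pdata x)
    (Dstar : X → ℝ) (hD : ∀ x, Dstar x = pdata x / (pdata x + pg x))
    (c : ℝ) (hc : c ∈ Set.Ioo (0:ℝ) 1)
    (φstar : X → ℝ) (hφstar : φstar = Set.indicator {x | Dstar x < c} (fun _ => (1:ℝ)))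
    (α : ℝ) (hα : α = ∫ x, φstar x * pdata x ∂μ)
    (φ : X → ℝ) (hφm : Measurable φ) (hφ01 : ∀ x, φ x ∈ Set.Icc (0:ℝ) 1)
    (hφfpr : ∫ x, φ x * pdata x ∂μ ≤ α) :
    ∫ x, φ x * pnovel x ∂μ ≤ ∫ x, φstar x * pnovel x ∂μ := by
  obtain rfl : pg = mixtureDensity pi pnovel pdata := funext hpg
  obtain rfl : Dstar = optimalDiscriminator pdata _ := funext hD
  exact optimal_discriminator_is_optimal_novelty_detector_general
    (.of_integral_ne_zero (by simp [hd1])) (.of_integral_ne_zero (by simp [hn1]))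
    (.of_forall fun x => (hd0 x).le) (.of_forall hn0) hpi hc.1 hφstar
    ⟨hφm.aestronglyMeasurable, .of_forall hφ01⟩ (hα ▸ hφfpr)
end

section
/- (Existence of the irreducible mixture decomposition.) Let P and Q be probability measures on a measurable space (Ω, 𝒜) with Q ≠ P. Let S = {β ∈ [0,1] : β·P ≤ Q} (inequality of measures, i.e. β·P(A) ≤ Q(A) for all A ∈ 𝒜) and let β* = sup S. Then: (i) β* ∈ S, i.e. β*·P ≤ Q; (ii) β* < 1; (iii) the measure R defined by R(A) = (Q(A) − β*·P(A))/(1−β*) is a probability measure; (iv) Q = β*·P + (1−β*)·R; and (v) R is irreducible with respect to P, i.e. there is no γ > 0 with γ·P ≤ R. -/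
open MeasureTheory Set ENNReal

/-!
The set of admissible weights `β` with `β • P ≤ Q` contains its supremum `β*`, because scaling a
measure commutes with suprema of weights. When `Q` has no more mass than `P` and differs from it,
no weight `β ≥ 1` is admissible, so the residual `Q - β* • P` can be rescaled by `(1 - β*)⁻¹`.
If the rescaled residual still dominated `γ • P` with `γ > 0`, then `β* + (1 - β*) * γ` would be an
admissible weight exceeding `β*`.
-/

section

variable {Ω : Type*} [MeasurableSpace Ω] {μ ν ρ : Measure Ω} {β c : ℝ≥0∞}

/-- The measure `ρ` is irreducible with respect to `μ`: no positive multiple of `μ` can be split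
off from `ρ`. The multiple ranges over all of `ℝ≥0∞`; for probability measures it is automatically
at most `1`. -/
def IsIrreducibleWrt (ρ μ : Measure Ω) : Prop :=
  ∀ γ : ℝ≥0∞, 0 < γ → ¬ γ • μ ≤ ρ

/-- What remains of `ν` after removing the component `β • μ`, rescaled to have weight `1 - β` in
the mixture `ν = β • μ + (1 - β) • normalizedResidual β μ ν`. It is meaningful for `β < 1` and
`β • μ ≤ ν`. -/
noncomputable def normalizedResidual (β : ℝ≥0∞) (μ ν : Measure Ω) : Measure Ω :=
  (1 - β)⁻¹ • (ν - β • μ)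

theorem sSup_smul_measure_le {S : Set ℝ≥0∞} (hS : ∀ β ∈ S, β • μ ≤ ν) : sSup S • μ ≤ ν := by
  refine Measure.le_iff.2 fun A _ ↦ ?_
  rw [Measure.smul_apply, smul_eq_mul, ENNReal.sSup_mul]
  exact iSup₂_le fun β hβ ↦ hS β hβ A

theorem isGreatest_sSup_smul_measure_le (μ ν : Measure Ω) :
    IsGreatest {β : ℝ≥0∞ | β • μ ≤ ν} (sSup {β : ℝ≥0∞ | β • μ ≤ ν}) :=
  ⟨sSup_smul_measure_le fun _ hβ ↦ hβ, fun _ hβ ↦ le_sSup hβ⟩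

theorem lt_one_of_smul_measure_le [IsFiniteMeasure μ] (hne : ν ≠ μ) (hmass : ν univ ≤ μ univ)
    (hle : β • μ ≤ ν) : β < 1 := by
  by_contra! hβ
  have hμν : μ ≤ ν := Measure.le_iff.2 fun A _ ↦
    (le_mul_of_one_le_left zero_le hβ).trans (hle A)
  exact hne (Measure.eq_of_le_of_measure_univ_eq hμν (le_antisymm (hμν univ) hmass)).symm

theorem normalizedResidual_apply [IsFiniteMeasure μ] (hβ : β ≠ ∞) (hle : β • μ ≤ ν) {A : Set Ω}
    (hA : MeasurableSet A) :
    normalizedResidual β μ ν A = (ν A - β * μ A) / (1 - β) := by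
  have : IsFiniteMeasure (β • μ) := Measure.smul_finite μ hβ
  rw [normalizedResidual, Measure.smul_apply, Measure.sub_apply hA hle, Measure.smul_apply,
    smul_eq_mul, smul_eq_mul, ENNReal.div_eq_inv_mul]

theorem smul_add_smul_normalizedResidual [IsFiniteMeasure μ] (hβ : β < 1) (hle : β • μ ≤ ν) :
    β • μ + (1 - β) • normalizedResidual β μ ν = ν := by
  have : IsFiniteMeasure (β • μ) := Measure.smul_finite μ hβ.ne_top
  rw [normalizedResidual, smul_smul,
    ENNReal.mul_inv_cancel (tsub_pos_of_lt hβ).ne' (ENNReal.sub_ne_top one_ne_top), one_smul,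
    add_comm, Measure.sub_add_cancel_of_le hle]

theorem isIrreducibleWrt_of_isGreatest (hgreatest : IsGreatest {b : ℝ≥0∞ | b • μ ≤ ν} β)
    (hβ : β ≠ ∞) (hc : c ≠ 0) (hmix : β • μ + c • ρ = ν) : IsIrreducibleWrt ρ μ := by
  intro γ hγ hγρ
  have hadmissible : (β + c * γ) • μ ≤ ν := by
    rw [← hmix, add_smul, mul_smul]
    gcongr
  have hlt : β < β + c * γ := ENNReal.lt_add_right hβ (mul_ne_zero hc hγ.ne')
  exact hlt.not_ge (hgreatest.2 hadmissible)

end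

theorem irreducible_mixture_decomposition_exists_general
    {Ω : Type*} [MeasurableSpace Ω] (P Q : Measure Ω) [IsFiniteMeasure P]
    (hne : Q ≠ P) (hmass : Q univ ≤ P univ)
    (S : Set ℝ≥0∞) (hS : S = {β | β ∈ Set.Icc (0:ℝ≥0∞) 1 ∧ β • P ≤ Q})
    (βstar : ℝ≥0∞) (hβ : βstar = sSup S) :
    βstar ∈ S ∧ βstar < 1 ∧
      ∃ R : Measure Ω,
        (∀ A : Set Ω, MeasurableSet A → R A = (Q A - βstar * P A) / (1 - βstar)) ∧
        Q = βstar • P + (1 - βstar) • R ∧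
        IsIrreducibleWrt R P := by
  have hS' : S = {β | β • P ≤ Q} := hS.trans <| Set.ext fun β ↦
    ⟨And.right, fun hle ↦ ⟨⟨zero_le, (lt_one_of_smul_measure_le hne hmass hle).le⟩, hle⟩⟩
  subst hS' hβ
  have hgreatest := isGreatest_sSup_smul_measure_le P Q
  have hlt := lt_one_of_smul_measure_le hne hmass hgreatest.1
  have hmix := smul_add_smul_normalizedResidual hlt hgreatest.1
  exact ⟨hgreatest.1, hlt, normalizedResidual _ P Q,
    fun _ hA ↦ normalizedResidual_apply hlt.ne_top hgreatest.1 hA, hmix.symm,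
    isIrreducibleWrt_of_isGreatest hgreatest hlt.ne_top (tsub_pos_of_lt hlt).ne' hmix⟩

/-- Existence of the irreducible mixture decomposition: for probability measures
`Q ≠ P`, with `β* = sup {β ∈ [0,1] : β·P ≤ Q}`, one has `β*·P ≤ Q`, `β* < 1`, and
`R(A) = (Q(A) − β*·P(A))/(1−β*)` defines a probability measure with
`Q = β*·P + (1−β*)·R` which is irreducible with respect to `P`. -/
theorem irreducible_mixture_decomposition_exists
    {Ω : Type*} [MeasurableSpace Ω] (P Q : Measure Ω)
    [IsProbabilityMeasure P] [IsProbabilityMeasure Q] (hne : Q ≠ P)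
    (S : Set ℝ≥0∞) (hS : S = {β | β ∈ Set.Icc (0:ℝ≥0∞) 1 ∧ β • P ≤ Q})
    (βstar : ℝ≥0∞) (hβ : βstar = sSup S) :
    βstar ∈ S ∧ βstar < 1 ∧
      ∃ R : Measure Ω,
        (∀ A : Set Ω, MeasurableSet A → R A = (Q A - βstar * P A) / (1 - βstar)) ∧
        IsProbabilityMeasure R ∧
        Q = βstar • P + (1 - βstar) • R ∧
        ∀ γ : ℝ≥0∞, 0 < γ → ¬ (γ • P ≤ R) := by
  obtain ⟨hmem, hlt, R, hR, hmix, hirr⟩ :=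
    irreducible_mixture_decomposition_exists_general P Q hne (by simp) S hS βstar hβ
  refine ⟨hmem, hlt, R, hR, ⟨?_⟩, hmix, hirr⟩
  rw [hR univ .univ, measure_univ, measure_univ, mul_one,
    ENNReal.div_self (tsub_pos_of_lt hlt).ne' (ENNReal.sub_ne_top one_ne_top)]
end

section
/- (Uniqueness of the irreducible mixture decomposition.) Let P and Q be probability measures on a measurable space (Ω, 𝒜) with Q ≠ P. Suppose Q = β₁·P + (1−β₁)·R₁ and Q = β₂·P + (1−β₂)·R₂, where β₁, β₂ ∈ [0,1) and R₁, R₂ are probability measures each irreducible with respect to P (i.e. for i = 1,2 there is no γ > 0 with γ·P ≤ R_i). Then β₁ = β₂ and R₁ = R₂. -/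
open MeasureTheory Set ENNReal

section

variable {Ω : Type*} [MeasurableSpace Ω] {P μ ν : Measure Ω} {a b c : ℝ≥0∞}

theorem smul_measure_add_right_inj [SigmaFinite P] (ha : a ≠ ∞) :
    a • P + μ = a • P + ν ↔ μ = ν := by
  lift a to NNReal using ha
  exact Measure.add_right_inj (a • P) μ ν

/-- Irreducibility of `μ` with respect to `P`: no positive multiple of `P` can be split off
from `μ`. Allowing `γ = ∞` costs nothing, since `∞ • P ≤ μ` entails `1 • P ≤ μ`. -/
def IrreducibleWrt (μ P : Measure Ω) : Prop :=
  ∀ γ : ℝ≥0∞, 0 < γ → ¬ (γ • P ≤ μ)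

theorem IrreducibleWrt.mono (hν : IrreducibleWrt ν P) (hμν : μ ≤ ν) : IrreducibleWrt μ P :=
  fun γ hγ hle => hν γ hγ (hle.trans hμν)

theorem IrreducibleWrt.smul_of_le_one (hμ : IrreducibleWrt μ P) (hc : c ≤ 1) :
    IrreducibleWrt (c • μ) P :=
  hμ.mono <| calc
    c • μ ≤ (1 : ℝ≥0∞) • μ := by gcongr
    _ = μ := one_smul _ μ

theorem IrreducibleWrt.le_of_smul_add_eq [SigmaFinite P] (hμ : IrreducibleWrt μ P) (ha : a ≠ ∞)
    (h : a • P + μ = b • P + ν) : b ≤ a := by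
  by_contra! hab
  have hμ_eq : μ = (b - a) • P + ν := (smul_measure_add_right_inj (P := P) ha).1 <| calc
    a • P + μ = b • P + ν := h
    _ = (a + (b - a)) • P + ν := by rw [add_tsub_cancel_of_le hab.le]
    _ = a • P + ((b - a) • P + ν) := by rw [add_smul, add_assoc]
  exact hμ (b - a) (tsub_pos_of_lt hab) (hμ_eq ▸ Measure.le_add_right le_rfl)

theorem IrreducibleWrt.smul_add_inj [SigmaFinite P] (hμ : IrreducibleWrt μ P)
    (hν : IrreducibleWrt ν P) (ha : a ≠ ∞) (hb : b ≠ ∞) :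
    a • P + μ = b • P + ν ↔ a = b ∧ μ = ν := by
  refine ⟨fun h => ?_, by rintro ⟨rfl, rfl⟩; rfl⟩
  obtain rfl : a = b := le_antisymm (hν.le_of_smul_add_eq hb h.symm) (hμ.le_of_smul_add_eq ha h)
  exact ⟨rfl, (smul_measure_add_right_inj ha).1 h⟩

end

theorem irreducible_mixture_decomposition_unique_general
    {Ω : Type*} [MeasurableSpace Ω] {P : Measure Ω} [SigmaFinite P]
    {β₁ β₂ : ℝ≥0∞} (hβ₁ : β₁ < 1) (hβ₂ : β₂ < 1) {R₁ R₂ : Measure Ω}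
    (hR₁ : IrreducibleWrt R₁ P) (hR₂ : IrreducibleWrt R₂ P)
    (h : β₁ • P + (1 - β₁) • R₁ = β₂ • P + (1 - β₂) • R₂) :
    β₁ = β₂ ∧ R₁ = R₂ := by
  obtain ⟨rfl, hR⟩ := ((hR₁.smul_of_le_one tsub_le_self).smul_add_inj
    (hR₂.smul_of_le_one tsub_le_self) hβ₁.ne_top hβ₂.ne_top).1 h
  have hunit : IsUnit (1 - β₁) :=
    ENNReal.isUnit_iff.2 ⟨(tsub_pos_of_lt hβ₁).ne', sub_ne_top one_ne_top⟩
  exact ⟨rfl, hunit.smul_left_cancel.1 hR⟩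

/-- Uniqueness of the irreducible mixture decomposition: if `Q ≠ P` and
`Q = βᵢ·P + (1−βᵢ)·Rᵢ` with `βᵢ ∈ [0,1)` and each `Rᵢ` irreducible with respect to `P`
(no `γ > 0` with `γ·P ≤ Rᵢ`), then `β₁ = β₂` and `R₁ = R₂`. -/
theorem irreducible_mixture_decomposition_unique
    {Ω : Type*} [MeasurableSpace Ω] (P Q : Measure Ω)
    [IsProbabilityMeasure P] [IsProbabilityMeasure Q] (hne : Q ≠ P)
    (β₁ β₂ : ℝ≥0∞) (hβ₁ : β₁ < 1) (hβ₂ : β₂ < 1)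
    (R₁ R₂ : Measure Ω) [IsProbabilityMeasure R₁] [IsProbabilityMeasure R₂]
    (h₁ : Q = β₁ • P + (1 - β₁) • R₁)
    (h₂ : Q = β₂ • P + (1 - β₂) • R₂)
    (hirr₁ : ∀ γ : ℝ≥0∞, 0 < γ → ¬ (γ • P ≤ R₁))
    (hirr₂ : ∀ γ : ℝ≥0∞, 0 < γ → ¬ (γ • P ≤ R₂)) :
    β₁ = β₂ ∧ R₁ = R₂ :=
  irreducible_mixture_decomposition_unique_general hβ₁ hβ₂ hirr₁ hirr₂ (h₁.symm.trans h₂)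
end
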